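/- Let μ > 0, let g : ℝⁿ → ℝ be a differentiable convex function, and let f : ℝⁿ → ℝ be a differentiable function that is μ-uniformly convex with respect to g and satisfies f(0) = 0 and f(x) ≥ 0 for all x. Let α, β : [0,∞) → ℝ be differentiable functions satisfying exp(α(t)) ≥ β'(t) > 0 for all t ≥ 0, and let a : [0,∞) → [0,1] be any function. Suppose X : [0,∞) → ℝⁿ is twice differentiable, and define Z(t) = X(t) + exp(−α(t))·X'(t) and Y(t) = X(t) + a(t)·(Z(t) − X(t)). Assume the curve t ↦ ∇g(Z(t)) is differentiable with derivative (d/dt)∇g(Z(t)) = −β'(t)·(∇g(Z(t)) − ∇g(Y(t))) − (exp(α(t))/μ)·∇f(Y(t)) for every t ≥ 0. Then the energy E(t) = exp(β(t))·(μ·D_g(0, Z(t)) + f(X(t))) is monotonically non-increasing on [0,∞), and f(X(t)) ≤ exp(−β(t))·E(0) for all t ≥ 0. -/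

import Mathlib

open Set RealInnerProductSpace

/-- Bregman divergence `D_g(y, x) = g(y) − g(x) − ⟨∇g(x), y − x⟩`, where `g'`
is the gradient map of `g`. -/
noncomputable def breg {n : ℕ} (g : EuclideanSpace ℝ (Fin n) → ℝ)
    (g' : EuclideanSpace ℝ (Fin n) → EuclideanSpace ℝ (Fin n))
    (y x : EuclideanSpace ℝ (Fin n)) : ℝ :=
  g y - g x - ⟪g' x, y - x⟫

/-!
Let `c` be a minimizer of `f` (here `c = 0`). Moving the base point of `D_g(c, Z)` from `Z` to `Y`
turns the `g`-terms of `exp(-β) E'` into `μ β' (D_g(c, Y) - D_g(Z, Y))`. Uniform convexity and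
`D_g ≥ 0` bound this by `β' D_f(c, Y)`, so `exp(-β) E'` is at most `β'` times the gap
`f(X) - f(c) + D_f(c, Y)`, minus `exp α` times `⟪∇f(Y), Z - c⟫ - ⟪∇f(X), Z - X⟫`. The gap is
nonnegative because `c` is a minimizer, and it is at most the latter quantity because `∇f` is
monotone along the segment from `X` to `Z` that carries `Y`.
-/

open scoped Topology
open Asymptotics

section InnerProductSpace

variable {H : Type*} [NormedAddCommGroup H] [InnerProductSpace ℝ H]

/-- The Bregman divergence `D_g(y, x)` on a real inner product space, with the gradient map `g'` of
`g` as an explicit argument; on Euclidean space it is `breg`. -/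
def bregmanDiv (g : H → ℝ) (g' : H → H) (y x : H) : ℝ :=
  g y - g x - ⟪g' x, y - x⟫

theorem bregmanDiv_three_point (g : H → ℝ) (g' : H → H) (x y z : H) :
    bregmanDiv g g' x z = bregmanDiv g g' x y + bregmanDiv g g' y z + ⟪g' y - g' z, x - y⟫ := by
  simp only [bregmanDiv, inner_sub_left, inner_sub_right]
  ring

theorem bregmanDiv_add_swap (g : H → ℝ) (g' : H → H) (x y : H) :
    bregmanDiv g g' x y + bregmanDiv g g' y x = ⟪g' x - g' y, x - y⟫ := by
  simp only [bregmanDiv, inner_sub_left, inner_sub_right]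
  ring

theorem bregmanDiv_nonneg [CompleteSpace H] {s : Set H} {g : H → ℝ} {g' : H → H} {x y : H}
    (hg : ConvexOn ℝ s g) (hx : x ∈ s) (hy : y ∈ s) (hg' : HasGradientAt g (g' x) x) :
    0 ≤ bregmanDiv g g' y x := by
  let line : ℝ →ᵃ[ℝ] H := AffineMap.lineMap x y
  have hline_zero : line 0 = x := AffineMap.lineMap_apply_zero x y
  have hline_one : line 1 = y := AffineMap.lineMap_apply_one x y
  have hderiv : HasDerivAt (g ∘ line) ⟪g' x, y - x⟫ 0 :=
    hg'.hasFDerivAt.comp_hasDerivAt_of_eq 0 AffineMap.hasDerivAt_lineMap hline_zero.symm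
  have hslope : ⟪g' x, y - x⟫ ≤ slope (g ∘ line) 0 1 :=
    (hg.comp_affineMap line).le_slope_of_hasDerivAt (by simpa [hline_zero]) (by simpa [hline_one])
      one_pos hderiv
  rw [slope_def_field, Function.comp_apply, Function.comp_apply, hline_zero, hline_one, sub_zero,
    div_one] at hslope
  exact sub_nonneg.2 hslope

/-- By the three-point identity, replacing `D_g(c, Z u) - D_g(c, Z t)` by
`⟪g' (Z u) - g' (Z t), Z t - c⟫` costs only `D_g(Z t, Z u)`, which the symmetrized
divergence bounds by `‖g' (Z u) - g' (Z t)‖ * ‖Z u - Z t‖ = O(u - t) * o(1)`. -/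
theorem hasDerivWithinAt_bregmanDiv {g : H → ℝ} {g' : H → H}
    (hg : ∀ x y, 0 ≤ bregmanDiv g g' y x) {Z : ℝ → H} {p' : H} {s : Set ℝ} {t : ℝ}
    (hZ : ContinuousWithinAt Z s t) (hp : HasDerivWithinAt (fun u => g' (Z u)) p' s t) (c : H) :
    HasDerivWithinAt (fun u => bregmanDiv g g' c (Z u)) ⟪p', Z t - c⟫ s t := by
  have hremainder : (fun u => bregmanDiv g g' (Z t) (Z u)) =o[𝓝[s] t] fun u => u - t := by
    have hZ_sub : (fun u => Z u - Z t) =o[𝓝[s] t] fun _ => (1 : ℝ) :=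
      (isLittleO_one_iff ℝ).2 (tendsto_sub_nhds_zero_iff.2 hZ)
    have hprod : (fun u => ‖g' (Z u) - g' (Z t)‖ * ‖Z u - Z t‖) =o[𝓝[s] t] fun u => u - t := by
      simpa only [mul_one] using hp.hasFDerivWithinAt.isBigO_sub.norm_left.mul_isLittleO
        hZ_sub.norm_left
    refine (IsBigO.of_norm_le fun u => ?_).trans_isLittleO hprod
    calc ‖bregmanDiv g g' (Z t) (Z u)‖ = bregmanDiv g g' (Z t) (Z u) :=
          Real.norm_of_nonneg (hg _ _)
      _ ≤ bregmanDiv g g' (Z u) (Z t) + bregmanDiv g g' (Z t) (Z u) :=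
          le_add_of_nonneg_left (hg _ _)
      _ = ⟪g' (Z u) - g' (Z t), Z u - Z t⟫ := bregmanDiv_add_swap g g' _ _
      _ ≤ ‖g' (Z u) - g' (Z t)‖ * ‖Z u - Z t‖ := real_inner_le_norm _ _
  have hlinear : HasDerivWithinAt (fun u => ⟪g' (Z u), Z t - c⟫) ⟪p', Z t - c⟫ s t := by
    simpa using hp.inner ℝ (hasDerivWithinAt_const t s (Z t - c))
  refine .of_isLittleO ((hremainder.add hlinear.isLittleO).congr_left fun u => ?_)
  rw [bregmanDiv_three_point g g' c (Z t) (Z u), ← neg_sub (Z t) c, inner_neg_right,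
    inner_sub_left]
  ring

theorem inner_sub_nonneg_of_mem_segment {F : H → H} {x y z : H}
    (hF : 0 ≤ ⟪F y - F x, y - x⟫) (hy : y ∈ segment ℝ x z) : 0 ≤ ⟪F y - F x, z - y⟫ := by
  rcases mem_segment_iff_sameRay.1 hy with hyx | hzy | ⟨r₁, r₂, hr₁, hr₂, hray⟩
  · simp [sub_eq_zero.1 hyx]
  · simp [hzy]
  · have hscaled : r₂ * ⟪F y - F x, z - y⟫ = r₁ * ⟪F y - F x, y - x⟫ := by
      rw [← real_inner_smul_right, ← hray, real_inner_smul_right]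
    exact nonneg_of_mul_nonneg_right (hscaled ▸ mul_nonneg hr₁.le hF) hr₂

theorem sub_add_bregmanDiv_le_of_mem_segment {f : H → ℝ} {f' : H → H}
    (hf : ∀ x y, 0 ≤ bregmanDiv f f' y x) {x y z : H} (hy : y ∈ segment ℝ x z) (c : H) :
    f x - f c + bregmanDiv f f' c y ≤ ⟪f' y, z - c⟫ - ⟪f' x, z - x⟫ := by
  have hmono : 0 ≤ ⟪f' y - f' x, y - x⟫ :=
    bregmanDiv_add_swap f f' y x ▸ add_nonneg (hf x y) (hf y x)
  have hdecomp : ⟪f' y, z - c⟫ - ⟪f' x, z - x⟫ =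
      f x - f c + bregmanDiv f f' c y + (bregmanDiv f f' y x + ⟪f' y - f' x, z - y⟫) := by
    simp only [bregmanDiv, inner_sub_left, inner_sub_right]
    ring
  rw [hdecomp]
  exact le_add_of_nonneg_right (add_nonneg (hf x y) (inner_sub_nonneg_of_mem_segment hmono hy))

theorem bregmanDiv_energy_rate_nonpos {f g : H → ℝ} {f' g' : H → H} {μ : ℝ} (hμ : 0 < μ)
    (hg : ∀ x y, 0 ≤ bregmanDiv g g' y x)
    (hunif : ∀ x y, μ * bregmanDiv g g' x y ≤ bregmanDiv f f' x y)
    {c : H} (hc : ∀ x, f c ≤ f x) {b e : ℝ} (hb : 0 ≤ b) (hbe : b ≤ e)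
    {x y z : H} (hy : y ∈ segment ℝ x z) :
    b * (μ * bregmanDiv g g' c z + (f x - f c)) +
      (μ * ⟪-b • (g' z - g' y) - (e / μ) • f' y, z - c⟫ + ⟪f' x, e • (z - x)⟫) ≤ 0 := by
  have hf : ∀ x y, 0 ≤ bregmanDiv f f' y x := fun x y =>
    (mul_nonneg hμ.le (hg x y)).trans (hunif y x)
  have hdiv : b * (μ * (bregmanDiv g g' c y - bregmanDiv g g' z y)) ≤ b * bregmanDiv f f' c y := by
    gcongr
    rw [mul_sub]
    exact (sub_le_self _ (mul_nonneg hμ.le (hg y z))).trans (hunif c y)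
  have hgap : b * (f x - f c + bregmanDiv f f' c y) ≤ e * (⟪f' y, z - c⟫ - ⟪f' x, z - x⟫) :=
    mul_le_mul hbe (sub_add_bregmanDiv_le_of_mem_segment hf hy c)
      (add_nonneg (sub_nonneg.2 (hc x)) (hf y c)) (hb.trans hbe)
  calc b * (μ * bregmanDiv g g' c z + (f x - f c)) +
        (μ * ⟪-b • (g' z - g' y) - (e / μ) • f' y, z - c⟫ + ⟪f' x, e • (z - x)⟫)
      = b * (μ * (bregmanDiv g g' c y - bregmanDiv g g' z y)) + b * (f x - f c) -
          e * (⟪f' y, z - c⟫ - ⟪f' x, z - x⟫) := by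
        rw [bregmanDiv_three_point g g' c z y, ← neg_sub z c]
        simp only [inner_sub_left (_ • _), real_inner_smul_left, real_inner_smul_right,
          inner_neg_right]
        field_simp
        ring
    _ ≤ 0 := by linarith

/-- The Lyapunov energy `exp(β) * (μ * D_g(c, Z) + f(X) - f(c))` of a trajectory `(X, Z)` with
respect to a point `c`, meant to be a minimizer of `f`. -/
noncomputable def bregmanEnergy (μ : ℝ) (f g : H → ℝ) (g' : H → H) (c : H) (β : ℝ → ℝ)
    (X Z : ℝ → H) (t : ℝ) : ℝ :=
  Real.exp (β t) * (μ * bregmanDiv g g' c (Z t) + (f (X t) - f c))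

theorem sub_le_exp_neg_mul_bregmanEnergy {μ : ℝ} (hμ : 0 ≤ μ) (f : H → ℝ) {g : H → ℝ}
    {g' : H → H} {c : H} (β : ℝ → ℝ) (X : ℝ → H) {Z : ℝ → H} {t : ℝ}
    (hg : 0 ≤ bregmanDiv g g' c (Z t)) :
    f (X t) - f c ≤ Real.exp (-β t) * bregmanEnergy μ f g g' c β X Z t := by
  rw [bregmanEnergy, Real.exp_neg, inv_mul_cancel_left₀ (Real.exp_ne_zero _)]
  exact le_add_of_nonneg_left (mul_nonneg hμ hg)

theorem hasDerivWithinAt_bregmanEnergy [CompleteSpace H] (μ : ℝ) {f g : H → ℝ} {f' g' : H → H}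
    (hg : ∀ x y, 0 ≤ bregmanDiv g g' y x) (c : H) {β : ℝ → ℝ} {X Z : ℝ → H} {b t : ℝ} {s : Set ℝ}
    {v p' : H} (hf' : HasGradientAt f (f' (X t)) (X t)) (hβ : HasDerivWithinAt β b s t)
    (hX : HasDerivWithinAt X v s t) (hZ : ContinuousWithinAt Z s t)
    (hp : HasDerivWithinAt (fun u => g' (Z u)) p' s t) :
    HasDerivWithinAt (bregmanEnergy μ f g g' c β X Z)
      (Real.exp (β t) * (b * (μ * bregmanDiv g g' c (Z t) + (f (X t) - f c)) +
        (μ * ⟪p', Z t - c⟫ + ⟪f' (X t), v⟫))) s t := by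
  have hfX : HasDerivWithinAt (fun u => f (X u)) ⟪f' (X t), v⟫ s t :=
    hf'.hasFDerivAt.comp_hasDerivWithinAt t hX
  have hdiv := (hasDerivWithinAt_bregmanDiv hg hZ hp c).const_mul μ
  exact (hβ.exp.mul (hdiv.add (hfX.sub_const (f c)))).congr_deriv
    (by simp only [Pi.add_apply]; ring)

theorem eq_exp_smul_sub_of_eq_add_exp_neg_smul {r : ℝ} {x v z : H}
    (h : z = x + Real.exp (-r) • v) : v = Real.exp r • (z - x) := by
  rw [h, add_sub_cancel_left, smul_smul, ← Real.exp_add, add_neg_cancel, Real.exp_zero, one_smul]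

theorem godeuc_energy_decay_general [CompleteSpace H] {μ : ℝ} (hμ : 0 < μ) {f g : H → ℝ}
    {f' g' : H → H} (hf' : ∀ x, HasGradientAt f (f' x) x) (hg' : ∀ x, HasGradientAt g (g' x) x)
    (hgconv : ConvexOn ℝ univ g) (hunif : ∀ x y, μ * bregmanDiv g g' x y ≤ bregmanDiv f f' x y)
    {c : H} (hc : ∀ x, f c ≤ f x) {β β' γ : ℝ → ℝ}
    (hβ : ∀ t, 0 ≤ t → HasDerivWithinAt β (β' t) (Ici 0) t)
    (hscale : ∀ t, 0 ≤ t → 0 ≤ β' t ∧ β' t ≤ γ t) {X Y Z : ℝ → H}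
    (hX : ∀ t, 0 ≤ t → HasDerivWithinAt X (γ t • (Z t - X t)) (Ici 0) t)
    (hZ : ContinuousOn Z (Ici 0)) (hY : ∀ t, 0 ≤ t → Y t ∈ segment ℝ (X t) (Z t))
    (hODE : ∀ t, 0 ≤ t → HasDerivWithinAt (fun u => g' (Z u))
      (-(β' t) • (g' (Z t) - g' (Y t)) - (γ t / μ) • f' (Y t)) (Ici 0) t) :
    AntitoneOn (bregmanEnergy μ f g g' c β X Z) (Ici 0) ∧
      ∀ t, 0 ≤ t → f (X t) - f c ≤ Real.exp (-β t) * bregmanEnergy μ f g g' c β X Z 0 := by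
  have hg : ∀ x y, 0 ≤ bregmanDiv g g' y x := fun x y =>
    bregmanDiv_nonneg hgconv (mem_univ x) (mem_univ y) (hg' x)
  have hderiv := fun t (ht : 0 ≤ t) => hasDerivWithinAt_bregmanEnergy μ hg c (hf' (X t))
    (hβ t ht) (hX t ht) (hZ t ht) (hODE t ht)
  have hanti : AntitoneOn (bregmanEnergy μ f g g' c β X Z) (Ici 0) := by
    refine antitoneOn_of_hasDerivWithinAt_nonpos (convex_Ici 0)
      (fun t ht => (hderiv t ht).continuousWithinAt)
      (fun t ht => (hderiv t (interior_subset ht)).mono interior_subset) fun t ht => ?_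
    obtain ⟨hβ'_nonneg, hβ'_le⟩ := hscale t (interior_subset ht)
    exact mul_nonpos_of_nonneg_of_nonpos (Real.exp_pos _).le
      (bregmanDiv_energy_rate_nonpos hμ hg hunif hc hβ'_nonneg hβ'_le (hY t (interior_subset ht)))
  refine ⟨hanti, fun t ht => (sub_le_exp_neg_mul_bregmanEnergy hμ.le f β X (hg (Z t) c)).trans ?_⟩
  gcongr
  exact hanti self_mem_Ici ht ht

end InnerProductSpace

/-- Lyapunov convergence of the generalized model (G-ODE-UC) in the uniformly convex case. -/
theorem godeuc_energy_decay {n : ℕ} (μ : ℝ) (hμ : 0 < μ)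
    (f g : EuclideanSpace ℝ (Fin n) → ℝ)
    (f' g' : EuclideanSpace ℝ (Fin n) → EuclideanSpace ℝ (Fin n))
    (hf' : ∀ x, HasGradientAt f (f' x) x)
    (hg' : ∀ x, HasGradientAt g (g' x) x)
    (hgconv : ConvexOn ℝ univ g)
    (hunif : ∀ x y, μ * breg g g' x y ≤ breg f f' x y)
    (hf0 : f 0 = 0)
    (hfnn : ∀ x, 0 ≤ f x)
    (α β α' β' : ℝ → ℝ)
    (hα : ∀ t, 0 ≤ t → HasDerivAt α (α' t) t)
    (hβ : ∀ t, 0 ≤ t → HasDerivAt β (β' t) t)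
    (hscale : ∀ t, 0 ≤ t → 0 < β' t ∧ β' t ≤ Real.exp (α t))
    (a : ℝ → ℝ)
    (ha : ∀ t, 0 ≤ t → a t ∈ Icc (0 : ℝ) 1)
    (X X' X'' Z Y : ℝ → EuclideanSpace ℝ (Fin n))
    (hX : ∀ t, 0 ≤ t → HasDerivAt X (X' t) t)
    (hX' : ∀ t, 0 ≤ t → HasDerivAt X' (X'' t) t)
    (hZ : ∀ t, Z t = X t + Real.exp (-α t) • X' t)
    (hY : ∀ t, Y t = X t + a t • (Z t - X t))
    (hODE : ∀ t, 0 ≤ t →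
      HasDerivAt (fun u => g' (Z u))
        (-(β' t) • (g' (Z t) - g' (Y t)) - (Real.exp (α t) / μ) • f' (Y t)) t)
    (E : ℝ → ℝ)
    (hE : ∀ t, E t = Real.exp (β t) * (μ * breg g g' 0 (Z t) + f (X t))) :
    AntitoneOn E (Ici 0) ∧ ∀ t, 0 ≤ t → f (X t) ≤ Real.exp (-β t) * E 0 := by
  have hZ_cont : ContinuousOn Z (Ici 0) := funext hZ ▸ fun t ht =>
    ((hX t ht).continuousAt.add
      ((hα t ht).continuousAt.neg.rexp.smul (hX' t ht).continuousAt)).continuousWithinAt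
  have hX_first_order : ∀ t, 0 ≤ t →
      HasDerivWithinAt X (Real.exp (α t) • (Z t - X t)) (Ici 0) t :=
    fun t ht => eq_exp_smul_sub_of_eq_add_exp_neg_smul (hZ t) ▸ (hX t ht).hasDerivWithinAt
  have hY_segment : ∀ t, 0 ≤ t → Y t ∈ segment ℝ (X t) (Z t) := fun t ht =>
    segment_eq_image' ℝ (X t) (Z t) ▸ ⟨a t, ha t ht, (hY t).symm⟩
  obtain rfl : E = bregmanEnergy μ f g g' 0 β X Z := funext fun t => by
    rw [hE, bregmanEnergy, hf0, sub_zero]; rfl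
  simpa only [hf0, sub_zero] using godeuc_energy_decay_general hμ hf' hg' hgconv hunif
    (fun x => hf0.trans_le (hfnn x)) (fun t ht => (hβ t ht).hasDerivWithinAt)
    (fun t ht => (hscale t ht).imp_left le_of_lt) hX_first_order hZ_cont hY_segment
    (fun t ht => (hODE t ht).hasDerivWithinAt)
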